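/- arXiv:2212.03765 — 3 statements merged into one kernel-verified Lean document; each statement's English description precedes it below -/
import Mathlib

section
/- Let f : ℝⁿ → ℝ be continuously differentiable and satisfy the PL inequality with modulus μ > 0, with f* = min f. Fix p > 2 and q ∈ (1,2), and let x : [0,∞) → ℝⁿ be a differentiable solution of the GenFlow dynamics ẋᵢ(t) = −sign(∇ᵢf(x(t)))·( |∇ᵢf(x(t))|^{1/(p−1)} + |∇ᵢf(x(t))|^{1/(q−1)} ). Then for every t ≥ 0, the derivative of t ↦ f(x(t)) − f* satisfies d/dt ( f(x(t)) − f* ) ≤ −( 2μ (f(x(t)) − f*) )^{p/(2(p−1))} − n^{(q−2)/(2(q−1))} · ( 2μ (f(x(t)) − f*) )^{q/(2(q−1))}. -/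
/-!
The chain rule gives `d/dt f(x(t)) = -∑ᵢ gᵢ sign(gᵢ) (|gᵢ|^{1/(p-1)} + |gᵢ|^{1/(q-1)})` with
`g = ∇f(x(t))`, and `gᵢ sign(gᵢ) |gᵢ|^{1/(p-1)} = (gᵢ²)^{p/(2(p-1))}`; likewise for `q`. The
exponent `p/(2(p-1))` is at most `1`, where powers are subadditive, while `q/(2(q-1))` is at least
`1`, where the power mean inequality applies at the cost of a power of `n`. Both sums of powers are
thus bounded below by powers of `‖g‖²`, which is at least `2μ(f(x(t)) - f*)` by the PL inequality.
-/

/-- The gradient of `f : ℝⁿ → ℝ`, as the vector of partial derivatives. -/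
noncomputable def grad {n : ℕ} (f : (Fin n → ℝ) → ℝ) (x : Fin n → ℝ) : Fin n → ℝ :=
  fun i => fderiv ℝ f x (Pi.single i 1)

open Finset

section SumRpow

variable {ι : Type*} {s : Finset ι} {a : ι → ℝ} {r : ℝ}

theorem rpow_sum_le_sum_rpow (hr₀ : 0 < r) (hr₁ : r ≤ 1) (ha : ∀ i ∈ s, 0 ≤ a i) :
    (∑ i ∈ s, a i) ^ r ≤ ∑ i ∈ s, a i ^ r :=
  le_sum_of_subadditive_on_pred (fun y : ℝ => y ^ r) (0 ≤ ·) (Real.zero_rpow hr₀.ne').le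
    (fun _ _ hy hz => Real.rpow_add_le_add_rpow hy hz hr₀.le hr₁) (fun _ _ => add_nonneg) a ha

theorem card_rpow_mul_rpow_sum_le_sum_rpow (hr : 1 ≤ r) (ha : ∀ i ∈ s, 0 ≤ a i) :
    (#s : ℝ) ^ (1 - r) * (∑ i ∈ s, a i) ^ r ≤ ∑ i ∈ s, a i ^ r := by
  rcases s.eq_empty_or_nonempty with rfl | hs
  · simp [Real.zero_rpow (zero_lt_one.trans_le hr).ne']
  have hcard : (0 : ℝ) < #s := mod_cast hs.card_pos
  calc (#s : ℝ) ^ (1 - r) * (∑ i ∈ s, a i) ^ r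
      ≤ (#s : ℝ) ^ (1 - r) * ((#s : ℝ) ^ (r - 1) * ∑ i ∈ s, a i ^ r) := by
        gcongr
        exact Real.rpow_sum_le_const_mul_sum_rpow_of_nonneg s hr ha
    _ = ∑ i ∈ s, a i ^ r := by
        rw [← mul_assoc, ← Real.rpow_add hcard, sub_add_sub_cancel, sub_self, Real.rpow_zero,
          one_mul]

end SumRpow

section GenFlowField

variable {ι : Type*} {p q : ℝ} {g : ι → ℝ}

/-- The right-hand side of the GenFlow dynamics, as a function of the gradient `g` at the current
point. -/
noncomputable def genFlowField (p q : ℝ) (g : ι → ℝ) : ι → ℝ :=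
  fun i => -(Real.sign (g i) * (|g i| ^ (1 / (p - 1)) + |g i| ^ (1 / (q - 1))))

theorem mul_sign_eq_abs (y : ℝ) : y * Real.sign y = |y| := by
  rcases lt_trichotomy y 0 with hy | rfl | hy
  · rw [Real.sign_of_neg hy, abs_of_neg hy, mul_neg_one]
  · rw [zero_mul, abs_zero]
  · rw [Real.sign_of_pos hy, abs_of_pos hy, mul_one]

theorem mul_sign_mul_abs_rpow {α : ℝ} (hα : 1 + α ≠ 0) (y : ℝ) :
    y * (Real.sign y * |y| ^ α) = (y ^ 2) ^ ((1 + α) / 2) :=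
  calc y * (Real.sign y * |y| ^ α)
      = |y| ^ (1 + α) := by
        rw [← mul_assoc, mul_sign_eq_abs, Real.rpow_one_add' (abs_nonneg y) hα]
    _ = |y| ^ (2 * ((1 + α) / 2)) := by rw [mul_div_cancel₀ _ two_ne_zero]
    _ = (y ^ 2) ^ ((1 + α) / 2) := by rw [Real.rpow_mul (abs_nonneg y), Real.rpow_two, sq_abs]

variable [Fintype ι]

theorem dotProduct_genFlowField (hp : 1 < p) (hq : 1 < q) :
    g ⬝ᵥ genFlowField p q g =
      -∑ i, (g i ^ 2) ^ (p / (2 * (p - 1))) - ∑ i, (g i ^ 2) ^ (q / (2 * (q - 1))) := by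
  have hterm {r : ℝ} (hr : 1 < r) (y : ℝ) :
      y * (Real.sign y * |y| ^ (1 / (r - 1))) = (y ^ 2) ^ (r / (2 * (r - 1))) := by
    have hr' : 0 < r - 1 := sub_pos.2 hr
    have hexp : (1 + 1 / (r - 1)) / 2 = r / (2 * (r - 1)) := by field_simp; ring
    rw [mul_sign_mul_abs_rpow (by positivity), hexp]
  simp only [dotProduct, genFlowField, ← hterm hp, ← hterm hq, ← sum_neg_distrib,
    ← sum_sub_distrib]
  exact sum_congr rfl fun i _ => by ring

theorem dotProduct_genFlowField_le {A : ℝ} (hp : 2 ≤ p) (hq : q ∈ Set.Ioc (1 : ℝ) 2)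
    (hA : 0 ≤ A) (hAg : A ≤ ∑ i, g i ^ 2) :
    g ⬝ᵥ genFlowField p q g ≤
      -A ^ (p / (2 * (p - 1))) -
        (Fintype.card ι : ℝ) ^ ((q - 2) / (2 * (q - 1))) * A ^ (q / (2 * (q - 1))) := by
  obtain ⟨hq₁, hq₂⟩ := hq
  have hp' : 0 < p - 1 := by linarith
  have hq' : 0 < q - 1 := sub_pos.2 hq₁
  have hp_exp_le : p / (2 * (p - 1)) ≤ 1 :=
    (div_le_one (mul_pos two_pos hp')).2 (by linarith)
  have hq_exp_ge : 1 ≤ q / (2 * (q - 1)) :=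
    (one_le_div (mul_pos two_pos hq')).2 (by linarith)
  have hcard_exp : (q - 2) / (2 * (q - 1)) = 1 - q / (2 * (q - 1)) := by field_simp; ring
  have hp_sum : A ^ (p / (2 * (p - 1))) ≤ ∑ i, (g i ^ 2) ^ (p / (2 * (p - 1))) :=
    (Real.rpow_le_rpow hA hAg (by positivity)).trans
      (rpow_sum_le_sum_rpow (by positivity) hp_exp_le fun i _ => sq_nonneg (g i))
  have hq_sum : (Fintype.card ι : ℝ) ^ ((q - 2) / (2 * (q - 1))) * A ^ (q / (2 * (q - 1))) ≤
      ∑ i, (g i ^ 2) ^ (q / (2 * (q - 1))) := by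
    rw [hcard_exp]
    refine le_trans ?_ (card_rpow_mul_rpow_sum_le_sum_rpow hq_exp_ge fun i _ => sq_nonneg (g i))
    rw [card_univ]
    gcongr
  rw [dotProduct_genFlowField (by linarith) hq₁]
  linarith

end GenFlowField

section Grad

variable {n : ℕ} {f : (Fin n → ℝ) → ℝ}

theorem fderiv_apply_eq_grad_dotProduct (y v : Fin n → ℝ) :
    fderiv ℝ f y v = grad f y ⬝ᵥ v := by
  conv_lhs => rw [pi_eq_sum_univ' v]
  simp only [map_sum, map_smul, smul_eq_mul, dotProduct, grad, mul_comm]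

theorem hasDerivAt_comp_grad {x : ℝ → Fin n → ℝ} {v : Fin n → ℝ} {t : ℝ}
    (hf : DifferentiableAt ℝ f (x t)) (hx : HasDerivAt x v t) :
    HasDerivAt (fun s => f (x s)) (grad f (x t) ⬝ᵥ v) t :=
  fderiv_apply_eq_grad_dotProduct (f := f) (x t) v ▸ hf.hasFDerivAt.comp_hasDerivAt t hx

theorem genFlow_lyapunov_differential_inequality_general {μ fstar p q t : ℝ} {x : ℝ → Fin n → ℝ}
    (hf : DifferentiableAt ℝ f (x t)) (hμ : 0 ≤ μ) (hfstar : fstar ≤ f (x t))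
    (hPL : μ * (f (x t) - fstar) ≤ (1 / 2) * ∑ i, grad f (x t) i ^ 2)
    (hp : 2 ≤ p) (hq : q ∈ Set.Ioc (1 : ℝ) 2)
    (hx : HasDerivAt x (genFlowField p q (grad f (x t))) t) :
    deriv (fun s => f (x s) - fstar) t ≤
      -(2 * μ * (f (x t) - fstar)) ^ (p / (2 * (p - 1))) -
        (n : ℝ) ^ ((q - 2) / (2 * (q - 1))) *
          (2 * μ * (f (x t) - fstar)) ^ (q / (2 * (q - 1))) := by
  have hgap : 0 ≤ 2 * μ * (f (x t) - fstar) := mul_nonneg (by positivity) (sub_nonneg.2 hfstar)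
  have hgrad : 2 * μ * (f (x t) - fstar) ≤ ∑ i, grad f (x t) i ^ 2 := by linarith
  rw [((hasDerivAt_comp_grad hf hx).sub_const fstar).deriv]
  simpa only [Fintype.card_fin] using dotProduct_genFlowField_le hp hq hgap hgrad

end Grad

/-- **Key differential inequality in the proof of Theorem 1.** Along any solution of
the GenFlow dynamics for a `C¹` function `f` satisfying the PL inequality with modulus
`μ > 0`, the Lyapunov function `f(x(t)) - f*` satisfies
`d/dt (f(x(t)) - f*) ≤ -(2μ(f(x(t))-f*))^{p/(2(p-1))} - n^{(q-2)/(2(q-1))} (2μ(f(x(t))-f*))^{q/(2(q-1))}`. -/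
theorem genFlow_lyapunov_differential_inequality
    {n : ℕ} (f : (Fin n → ℝ) → ℝ) (hf : ContDiff ℝ 1 f)
    (μ : ℝ) (hμ : 0 < μ)
    (fstar : ℝ) (hfstar : ∃ xstar, f xstar = fstar ∧ ∀ y, fstar ≤ f y)
    (hPL : ∀ y, μ * (f y - fstar) ≤ (1 / 2) * ∑ i, grad f y i ^ 2)
    (p q : ℝ) (hp : 2 < p) (hq : q ∈ Set.Ioo (1 : ℝ) 2)
    (x : ℝ → (Fin n → ℝ))
    (hx : ∀ t : ℝ, 0 ≤ t → ∀ i, HasDerivAt (fun s => x s i)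
      (-(Real.sign (grad f (x t) i) *
          (|grad f (x t) i| ^ (1 / (p - 1)) + |grad f (x t) i| ^ (1 / (q - 1))))) t) :
    ∀ t : ℝ, 0 ≤ t →
      deriv (fun s => f (x s) - fstar) t ≤
        -(2 * μ * (f (x t) - fstar)) ^ (p / (2 * (p - 1))) -
          (n : ℝ) ^ ((q - 2) / (2 * (q - 1))) *
            (2 * μ * (f (x t) - fstar)) ^ (q / (2 * (q - 1))) := by
  obtain ⟨_, _, hmin⟩ := hfstar
  exact fun t ht => genFlow_lyapunov_differential_inequality_general
    (hf.differentiable one_ne_zero (x t)) hμ.le (hmin (x t)) (hPL (x t)) hp.le ⟨hq.1, hq.2.le⟩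
    (hasDerivAt_pi.2 (hx t ht))
end

section
/- Let f : ℝⁿ → ℝ be continuously differentiable, satisfy the PL inequality with modulus μ > 0, and possess a unique minimizer x* with f(x*) = f* = min f. Fix p > 2 and q ∈ (1,2), and let (x, v) : [0,∞) → ℝⁿ × ℝⁿ be a differentiable solution of the GenFlow(M) dynamics v̇ᵢ(t) = ∇ᵢf(x(t)) − sign(vᵢ(t))·( |vᵢ(t)|^{1/(p−1)} + |vᵢ(t)|^{1/(q−1)} ), ẋᵢ(t) = −vᵢ(t) − sign(∇ᵢf(x(t)))·( |∇ᵢf(x(t))|^{1/(p−1)} + |∇ᵢf(x(t))|^{1/(q−1)} ), for i = 1,…,n. Then (x(t), v(t)) = (x*, 0) for all t ≥ T̄, where T̄ = 1/(a(1−α)) + 1/(b(β−1)) with α = p/(2(p−1)), β = q/(2(q−1)), a = 2^{α}·min(1, μ^{α}), and b = 2·n^{(q−2)/(2(q−1))}·min(1, μ^{β}). -/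
/-!
The energy `V = (f(x) - f*) + ‖v‖²/2` is a Lyapunov function. Along the flow the two coupling terms
`⟪∇f(x), v⟫` cancel, and with `u = (∇f(x), v) ∈ ℝ²ⁿ` what remains is
`V̇ = -∑ⱼ (uⱼ²)^α - ∑ⱼ (uⱼ²)^β`. The PL inequality gives `2 min(1, μ) V ≤ ∑ⱼ uⱼ²`, so subadditivity
of `y ↦ y ^ α` and Jensen's inequality for `y ↦ y ^ β` over the `2n` coordinates of `u` yield
`V̇ ≤ -a V ^ α - b V ^ β`. While `V > 0`, the `β`-term makes `V ^ (1 - β)` grow at rate at least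
`b (β - 1)`, so `V ≤ 1` after time `1 / (b (β - 1))`; from then on the `α`-term makes `V ^ (1 - α)`
decrease at rate at least `a (1 - α)`, so `V` vanishes after a further time `1 / (a (1 - α))`.
-/

open Set

section FixedTime

variable {V V' : ℝ → ℝ} {c γ s t : ℝ}

lemma antitoneOn_Icc_of_hasDerivAt_nonpos (hV : ∀ r ∈ Icc s t, HasDerivAt V (V' r) r)
    (hV' : ∀ r ∈ Icc s t, V' r ≤ 0) : AntitoneOn V (Icc s t) :=
  antitoneOn_of_hasDerivWithinAt_nonpos (convex_Icc s t)
    (fun r hr ↦ (hV r hr).continuousAt.continuousWithinAt)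
    (fun r hr ↦ (hV r (interior_subset hr)).hasDerivWithinAt)
    (fun r hr ↦ hV' r (interior_subset hr))

lemma pos_of_deriv_le_neg_mul_rpow (hc : 0 ≤ c) (h0 : ∀ r ∈ Icc s t, 0 ≤ V r)
    (hV : ∀ r ∈ Icc s t, HasDerivAt V (V' r) r) (hV' : ∀ r ∈ Icc s t, V' r ≤ -(c * V r ^ γ))
    (ht : 0 < V t) : ∀ r ∈ Icc s t, 0 < V r := fun _ hr ↦
  have hanti : AntitoneOn V (Icc s t) := antitoneOn_Icc_of_hasDerivAt_nonpos hV fun r hr ↦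
    (hV' r hr).trans (neg_nonpos.2 (mul_nonneg hc (Real.rpow_nonneg (h0 r hr) γ)))
  ht.trans_le (hanti hr (right_mem_Icc.2 (hr.1.trans hr.2)) hr.2)

/-- The function `V ^ (1 - γ) / (1 - γ)` is the primitive of `V' / V ^ γ`, so it separates the
variables of `V' ≤ -c V ^ γ` for `γ < 1` and for `1 < γ` alike. -/
lemma rpow_one_sub_div_le_sub (hst : s ≤ t) (hγ : γ ≠ 1) (hpos : ∀ r ∈ Icc s t, 0 < V r)
    (hV : ∀ r ∈ Icc s t, HasDerivAt V (V' r) r) (hV' : ∀ r ∈ Icc s t, V' r ≤ -(c * V r ^ γ)) :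
    V t ^ (1 - γ) / (1 - γ) ≤ V s ^ (1 - γ) / (1 - γ) - c * (t - s) := by
  have hγ' : 1 - γ ≠ 0 := sub_ne_zero.2 hγ.symm
  have hderiv : ∀ r ∈ Icc s t, HasDerivAt (fun r ↦ V r ^ (1 - γ) / (1 - γ) + c * r)
      (V' r / V r ^ γ + c) r := fun r hr ↦ by
    refine ((((hV r hr).rpow_const (.inl (hpos r hr).ne')).div_const (1 - γ)).add
      ((hasDerivAt_id r).const_mul c)).congr_deriv ?_
    rw [show 1 - γ - 1 = -γ by ring, Real.rpow_neg (hpos r hr).le]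
    field_simp
  have hle : ∀ r ∈ Icc s t, V' r / V r ^ γ + c ≤ 0 := fun r hr ↦ by
    have := (div_le_iff₀ (Real.rpow_pos_of_pos (hpos r hr) γ)).2
      ((hV' r hr).trans_eq (neg_mul c (V r ^ γ)).symm)
    linarith
  have := antitoneOn_Icc_of_hasDerivAt_nonpos hderiv hle
    (left_mem_Icc.2 hst) (right_mem_Icc.2 hst) hst
  dsimp only at this
  linarith

lemma le_one_of_deriv_le_neg_mul_rpow (hst : s ≤ t) (hc : 0 ≤ c) (hγ : 1 < γ)
    (h0 : ∀ r ∈ Icc s t, 0 ≤ V r) (hV : ∀ r ∈ Icc s t, HasDerivAt V (V' r) r)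
    (hV' : ∀ r ∈ Icc s t, V' r ≤ -(c * V r ^ γ)) (htime : 1 ≤ c * (γ - 1) * (t - s)) :
    V t ≤ 1 := by
  by_contra! hlt
  have hpos := pos_of_deriv_le_neg_mul_rpow hc h0 hV hV' (one_pos.trans hlt)
  have hdecay := rpow_one_sub_div_le_sub hst hγ.ne' hpos hV hV'
  have hgrowth : V s ^ (1 - γ) + c * (γ - 1) * (t - s) ≤ V t ^ (1 - γ) := by
    have := mul_le_mul_of_nonpos_right hdecay (sub_nonpos.2 hγ.le)
    rw [sub_mul, div_mul_cancel₀ _ (sub_neg.2 hγ).ne, div_mul_cancel₀ _ (sub_neg.2 hγ).ne] at this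
    linarith
  have hs : 0 < V s ^ (1 - γ) := Real.rpow_pos_of_pos (hpos s (left_mem_Icc.2 hst)) _
  have ht : V t ^ (1 - γ) < 1 := Real.rpow_lt_one_of_one_lt_of_neg hlt (sub_neg.2 hγ)
  linarith

lemma eq_zero_of_deriv_le_neg_mul_rpow (hst : s ≤ t) (hc : 0 ≤ c) (hγ : γ < 1)
    (h0 : ∀ r ∈ Icc s t, 0 ≤ V r) (hV : ∀ r ∈ Icc s t, HasDerivAt V (V' r) r)
    (hV' : ∀ r ∈ Icc s t, V' r ≤ -(c * V r ^ γ))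
    (htime : V s ^ (1 - γ) ≤ c * (1 - γ) * (t - s)) : V t = 0 := by
  by_contra hne
  have hlt : 0 < V t := (h0 t (right_mem_Icc.2 hst)).lt_of_ne' hne
  have hpos := pos_of_deriv_le_neg_mul_rpow hc h0 hV hV' hlt
  have hdecay := rpow_one_sub_div_le_sub hst hγ.ne hpos hV hV'
  have hdecrease : V t ^ (1 - γ) ≤ V s ^ (1 - γ) - c * (1 - γ) * (t - s) := by
    have := mul_le_mul_of_nonneg_right hdecay (sub_nonneg.2 hγ.le)
    rw [sub_mul, div_mul_cancel₀ _ (sub_pos.2 hγ).ne', div_mul_cancel₀ _ (sub_pos.2 hγ).ne'] at this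
    linarith
  have ht : 0 < V t ^ (1 - γ) := Real.rpow_pos_of_pos hlt _
  linarith

theorem eq_zero_of_deriv_le_neg_rpow_add_rpow {a b α β : ℝ} (ha : 0 < a) (hb : 0 < b)
    (hα : α < 1) (hβ : 1 < β) (h0 : ∀ r, 0 ≤ r → 0 ≤ V r)
    (hV : ∀ r, 0 ≤ r → HasDerivAt V (V' r) r)
    (hV' : ∀ r, 0 ≤ r → V' r ≤ -(a * V r ^ α + b * V r ^ β))
    (ht : 1 / (a * (1 - α)) + 1 / (b * (β - 1)) ≤ t) : V t = 0 := by
  have hA : 0 < a * (1 - α) := mul_pos ha (sub_pos.2 hα)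
  have hB : 0 < b * (β - 1) := mul_pos hb (sub_pos.2 hβ)
  set t₁ := 1 / (b * (β - 1)) with ht₁
  have ht₁0 : 0 ≤ t₁ := (one_div_pos.2 hB).le
  have htime : 1 / (a * (1 - α)) ≤ t - t₁ := by linarith
  have ht₁t : t₁ ≤ t := sub_nonneg.1 ((one_div_pos.2 hA).le.trans htime)
  have hVα : ∀ r, 0 ≤ r → V' r ≤ -(a * V r ^ α) := fun r hr ↦ by
    linarith [hV' r hr, mul_nonneg hb.le (Real.rpow_nonneg (h0 r hr) β)]
  have hVβ : ∀ r, 0 ≤ r → V' r ≤ -(b * V r ^ β) := fun r hr ↦ by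
    linarith [hV' r hr, mul_nonneg ha.le (Real.rpow_nonneg (h0 r hr) α)]
  have hle_one : V t₁ ≤ 1 :=
    le_one_of_deriv_le_neg_mul_rpow ht₁0 hb.le hβ (fun r hr ↦ h0 r hr.1) (fun r hr ↦ hV r hr.1)
      (fun r hr ↦ hVβ r hr.1) (by rw [sub_zero, ht₁, mul_one_div_cancel hB.ne'])
  refine eq_zero_of_deriv_le_neg_mul_rpow ht₁t ha.le hα (fun r hr ↦ h0 r (ht₁0.trans hr.1))
    (fun r hr ↦ hV r (ht₁0.trans hr.1)) (fun r hr ↦ hVα r (ht₁0.trans hr.1)) ?_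
  calc V t₁ ^ (1 - α) ≤ 1 := Real.rpow_le_one (h0 t₁ ht₁0) hle_one (sub_nonneg.2 hα.le)
    _ ≤ a * (1 - α) * (t - t₁) := (div_le_iff₀' hA).1 htime

end FixedTime

section PowerSums

variable {ι : Type*} {s : Finset ι} {w : ι → ℝ} {γ : ℝ}

lemma rpow_sum_le_sum_rpow_of_le_one (hγ0 : 0 < γ) (hγ1 : γ ≤ 1) (hw : ∀ i ∈ s, 0 ≤ w i) :
    (∑ i ∈ s, w i) ^ γ ≤ ∑ i ∈ s, w i ^ γ :=
  Finset.le_sum_of_subadditive_on_pred (· ^ γ) (0 ≤ ·) (Real.zero_rpow hγ0.ne').le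
    (fun _ _ hx hy ↦ Real.rpow_add_le_add_rpow hx hy hγ0.le hγ1) (fun _ _ ↦ add_nonneg) w hw

lemma card_rpow_mul_rpow_sum_le_sum_rpow_s5 (hγ : 1 ≤ γ) (hw : ∀ i ∈ s, 0 ≤ w i) :
    (s.card : ℝ) ^ (1 - γ) * (∑ i ∈ s, w i) ^ γ ≤ ∑ i ∈ s, w i ^ γ := by
  rcases s.eq_empty_or_nonempty with rfl | hs
  · simp [Real.zero_rpow (one_pos.trans_le hγ).ne']
  have hcard : (0 : ℝ) < s.card := mod_cast hs.card_pos
  calc (s.card : ℝ) ^ (1 - γ) * (∑ i ∈ s, w i) ^ γ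
      ≤ (s.card : ℝ) ^ (1 - γ) * ((s.card : ℝ) ^ (γ - 1) * ∑ i ∈ s, w i ^ γ) := by
        gcongr
        exact Real.rpow_sum_le_const_mul_sum_rpow_of_nonneg s hγ hw
    _ = ∑ i ∈ s, w i ^ γ := by
        rw [← mul_assoc, ← Real.rpow_add hcard]
        simp

lemma min_one_rpow {μ : ℝ} (hμ : 0 ≤ μ) (hγ : 0 ≤ γ) : min 1 μ ^ γ = min 1 (μ ^ γ) := by
  rw [(Real.monotoneOn_rpow_Ici_of_exponent_nonneg hγ).map_min (mem_Ici.2 zero_le_one) hμ,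
    Real.one_rpow]

end PowerSums

section Energy

variable {ι : Type*} [Fintype ι] {f : (ι → ℝ) → ℝ} {fstar μ γ : ℝ} {x g v : ι → ℝ}

/-- The Lyapunov function `(f(x) - f*) + ‖v‖²/2` of the momentum dynamics. -/
noncomputable def genFlowEnergy (f : (ι → ℝ) → ℝ) (fstar : ℝ) (x v : ι → ℝ) : ℝ :=
  f x - fstar + 1 / 2 * ∑ i, v i ^ 2

/-- The power sum `∑ᵢ |gᵢ|^(2γ) + ∑ᵢ |vᵢ|^(2γ)`, the part of the energy decay rate due to one of
the two damping terms. It is a single sum over the disjoint union of the coordinates of `g` and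
`v`, and `|y|^(2γ)` is written as `(y²)^γ`. -/
noncomputable def genFlowDissipation (γ : ℝ) (g v : ι → ℝ) : ℝ :=
  ∑ j, (Sum.elim g v j ^ 2) ^ γ

lemma genFlowEnergy_nonneg (hx : fstar ≤ f x) : 0 ≤ genFlowEnergy f fstar x v :=
  add_nonneg (sub_nonneg.2 hx) (by positivity)

lemma genFlowEnergy_eq_zero_iff (hx : fstar ≤ f x) :
    genFlowEnergy f fstar x v = 0 ↔ f x = fstar ∧ v = 0 := by
  rw [genFlowEnergy, add_eq_zero_iff_of_nonneg (sub_nonneg.2 hx) (by positivity), sub_eq_zero,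
    mul_eq_zero_iff_left (by norm_num), Finset.sum_eq_zero_iff_of_nonneg fun _ _ ↦ sq_nonneg _]
  simp [funext_iff]

lemma two_mul_min_one_mul_genFlowEnergy_le (hx : fstar ≤ f x)
    (hPL : μ * (f x - fstar) ≤ 1 / 2 * ∑ i, g i ^ 2) :
    2 * min 1 μ * genFlowEnergy f fstar x v ≤ ∑ j, Sum.elim g v j ^ 2 := by
  have hf : min 1 μ * (f x - fstar) ≤ μ * (f x - fstar) :=
    mul_le_mul_of_nonneg_right (min_le_right 1 μ) (sub_nonneg.2 hx)
  have hv : min 1 μ * ∑ i, v i ^ 2 ≤ 1 * ∑ i, v i ^ 2 :=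
    mul_le_mul_of_nonneg_right (min_le_left 1 μ) (by positivity)
  simp only [genFlowEnergy, Fintype.sum_sum_type, Sum.elim_inl, Sum.elim_inr]
  linarith

lemma rpow_mul_genFlowEnergy_rpow_le (hμ : 0 ≤ μ) (hγ : 0 ≤ γ) (hx : fstar ≤ f x)
    (hPL : μ * (f x - fstar) ≤ 1 / 2 * ∑ i, g i ^ 2) :
    2 ^ γ * min 1 (μ ^ γ) * genFlowEnergy f fstar x v ^ γ ≤ (∑ j, Sum.elim g v j ^ 2) ^ γ := by
  have hE : 0 ≤ genFlowEnergy f fstar x v := genFlowEnergy_nonneg hx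
  rw [← min_one_rpow hμ hγ, ← Real.mul_rpow zero_le_two (by positivity),
    ← Real.mul_rpow (by positivity) hE]
  exact Real.rpow_le_rpow (by positivity) (two_mul_min_one_mul_genFlowEnergy_le hx hPL) hγ

lemma le_genFlowDissipation_of_le_one (hμ : 0 ≤ μ) (hγ0 : 0 < γ) (hγ1 : γ ≤ 1) (hx : fstar ≤ f x)
    (hPL : μ * (f x - fstar) ≤ 1 / 2 * ∑ i, g i ^ 2) :
    2 ^ γ * min 1 (μ ^ γ) * genFlowEnergy f fstar x v ^ γ ≤ genFlowDissipation γ g v :=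
  (rpow_mul_genFlowEnergy_rpow_le hμ hγ0.le hx hPL).trans
    (rpow_sum_le_sum_rpow_of_le_one hγ0 hγ1 fun _ _ ↦ sq_nonneg _)

lemma le_genFlowDissipation_of_one_le (hμ : 0 ≤ μ) (hγ : 1 ≤ γ) (hx : fstar ≤ f x)
    (hPL : μ * (f x - fstar) ≤ 1 / 2 * ∑ i, g i ^ 2) :
    2 * (Fintype.card ι : ℝ) ^ (1 - γ) * min 1 (μ ^ γ) * genFlowEnergy f fstar x v ^ γ ≤
      genFlowDissipation γ g v := by
  have hcard : ((Finset.univ : Finset (ι ⊕ ι)).card : ℝ) = 2 * Fintype.card ι := by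
    rw [Finset.card_univ, Fintype.card_sum]
    push_cast
    ring
  have hpow : (2 : ℝ) ^ (1 - γ) * 2 ^ γ = 2 := by
    rw [← Real.rpow_add two_pos, sub_add_cancel, Real.rpow_one]
  calc 2 * (Fintype.card ι : ℝ) ^ (1 - γ) * min 1 (μ ^ γ) * genFlowEnergy f fstar x v ^ γ
      = (2 * Fintype.card ι : ℝ) ^ (1 - γ) *
          (2 ^ γ * min 1 (μ ^ γ) * genFlowEnergy f fstar x v ^ γ) := by
        rw [Real.mul_rpow zero_le_two (Nat.cast_nonneg _)]
        nth_rewrite 1 [← hpow]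
        ring
    _ ≤ (2 * Fintype.card ι : ℝ) ^ (1 - γ) * (∑ j, Sum.elim g v j ^ 2) ^ γ := by
        gcongr
        exact rpow_mul_genFlowEnergy_rpow_le hμ (zero_le_one.trans hγ) hx hPL
    _ ≤ genFlowDissipation γ g v := by
        rw [← hcard]
        exact card_rpow_mul_rpow_sum_le_sum_rpow_s5 hγ fun _ _ ↦ sq_nonneg _

end Energy

/-- The scalar damping law `y ↦ y (|y|^(r - 1) + |y|^(s - 1))` of GenFlow, with the factor `y / |y|`
written as `sign y` so that the value at `0` is `0`. In the paper's parameters `r = 1 / (p - 1)`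
and `s = 1 / (q - 1)`. -/
noncomputable def genFlowDamping (r s y : ℝ) : ℝ :=
  Real.sign y * (|y| ^ r + |y| ^ s)

lemma mul_sign_mul_abs_rpow_s5 {γ : ℝ} (hγ : γ ≠ 0) (y : ℝ) :
    y * (Real.sign y * |y| ^ (2 * γ - 1)) = (y ^ 2) ^ γ := by
  rcases eq_or_ne y 0 with rfl | hy
  · simp [Real.zero_rpow hγ]
  have hsign : y * Real.sign y = |y| := by
    rcases hy.lt_or_gt with h | h
    · rw [Real.sign_of_neg h, abs_of_neg h, mul_neg_one]
    · rw [Real.sign_of_pos h, abs_of_pos h, mul_one]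
  rw [← mul_assoc, hsign, ← Real.rpow_one_add' (abs_nonneg y) (by simpa using hγ),
    add_sub_cancel, Real.rpow_mul (abs_nonneg y), Real.rpow_two, sq_abs]

lemma mul_genFlowDamping {α β : ℝ} (hα : α ≠ 0) (hβ : β ≠ 0) (y : ℝ) :
    y * genFlowDamping (2 * α - 1) (2 * β - 1) y = (y ^ 2) ^ α + (y ^ 2) ^ β := by
  rw [genFlowDamping, mul_add, mul_add, mul_sign_mul_abs_rpow_s5 hα, mul_sign_mul_abs_rpow_s5 hβ]

lemma one_div_sub_one_eq_two_mul_sub_one {p : ℝ} (hp : p ≠ 1) :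
    1 / (p - 1) = 2 * (p / (2 * (p - 1))) - 1 := by
  have : p - 1 ≠ 0 := sub_ne_zero.2 hp
  field_simp
  ring

lemma sub_two_div_eq_one_sub {q : ℝ} (hq : q ≠ 1) :
    (q - 2) / (2 * (q - 1)) = 1 - q / (2 * (q - 1)) := by
  have : q - 1 ≠ 0 := sub_ne_zero.2 hq
  field_simp
  ring

section Flow

variable {n : ℕ} {f : (Fin n → ℝ) → ℝ} {fstar μ α β t : ℝ} {x v : ℝ → Fin n → ℝ}

lemma fderiv_apply_eq_sum_grad (x y : Fin n → ℝ) : fderiv ℝ f x y = ∑ i, grad f x i * y i := by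
  conv_lhs => rw [pi_eq_sum_univ' y, map_sum]
  simp [grad, mul_comm]

/-- `(x, v)` solves the GenFlow(M) dynamics for `f` on `[0, ∞)`, with damping exponents `r` and `s`
(see `genFlowDamping`). The derivatives at time `0` are two-sided. -/
structure IsGenFlowM (f : (Fin n → ℝ) → ℝ) (r s : ℝ) (x v : ℝ → Fin n → ℝ) : Prop where
  hasDerivAt_velocity : ∀ t, 0 ≤ t → ∀ i,
    HasDerivAt (fun τ ↦ v τ i) (grad f (x t) i - genFlowDamping r s (v t i)) t
  hasDerivAt_position : ∀ t, 0 ≤ t → ∀ i,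
    HasDerivAt (fun τ ↦ x τ i) (-v t i - genFlowDamping r s (grad f (x t) i)) t

namespace IsGenFlowM

lemma hasDerivAt_genFlowEnergy (h : IsGenFlowM f (2 * α - 1) (2 * β - 1) x v)
    (hf : Differentiable ℝ f) (hα : α ≠ 0) (hβ : β ≠ 0) (ht : 0 ≤ t) :
    HasDerivAt (fun τ ↦ genFlowEnergy f fstar (x τ) (v τ))
      (-(genFlowDissipation α (grad f (x t)) (v t) +
        genFlowDissipation β (grad f (x t)) (v t))) t := by
  have hpotential := ((hf (x t)).hasFDerivAt.comp_hasDerivAt t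
    (hasDerivAt_pi.2 (h.hasDerivAt_position t ht))).sub_const fstar
  have hkinetic := (HasDerivAt.fun_sum (u := Finset.univ)
    fun i _ ↦ (h.hasDerivAt_velocity t ht i).fun_pow 2).const_mul (1 / 2 : ℝ)
  refine (hpotential.add hkinetic).congr_deriv ?_
  simp only [genFlowDissipation, ← Finset.sum_add_distrib, ← mul_genFlowDamping hα hβ]
  rw [fderiv_apply_eq_sum_grad, Fintype.sum_sum_type, Finset.mul_sum, ← Finset.sum_add_distrib,
    ← Finset.sum_add_distrib, ← Finset.sum_neg_distrib]
  refine Finset.sum_congr rfl fun i _ ↦ ?_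
  simp only [Sum.elim_inl, Sum.elim_inr]
  push_cast
  ring

theorem genFlowEnergy_eq_zero (h : IsGenFlowM f (2 * α - 1) (2 * β - 1) x v)
    (hf : Differentiable ℝ f) (hμ : 0 < μ) (hmin : ∀ y, fstar ≤ f y)
    (hPL : ∀ y, μ * (f y - fstar) ≤ 1 / 2 * ∑ i, grad f y i ^ 2)
    (hα0 : 0 < α) (hα1 : α < 1) (hβ : 1 < β)
    (ht : 1 / (2 ^ α * min 1 (μ ^ α) * (1 - α)) +
      1 / (2 * (n : ℝ) ^ (1 - β) * min 1 (μ ^ β) * (β - 1)) ≤ t) :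
    genFlowEnergy f fstar (x t) (v t) = 0 := by
  rcases n.eq_zero_or_pos with rfl | hn
  · -- The rate `2 * 0 ^ (1 - β) * min 1 (μ ^ β)` is `0` here, but PL forces `f` to be `fstar`.
    have hgap : μ * (f (x t) - fstar) ≤ 0 := by simpa using hPL (x t)
    have hle : f (x t) ≤ fstar := sub_nonpos.1 (nonpos_of_mul_nonpos_right hgap hμ)
    exact (genFlowEnergy_eq_zero_iff (hmin _)).2 ⟨hle.antisymm (hmin _), Subsingleton.elim _ _⟩
  refine eq_zero_of_deriv_le_neg_rpow_add_rpow (V := fun τ ↦ genFlowEnergy f fstar (x τ) (v τ))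
    (by positivity) (by positivity) hα1 hβ (fun r _ ↦ genFlowEnergy_nonneg (hmin (x r)))
    (fun r hr ↦ h.hasDerivAt_genFlowEnergy hf hα0.ne' (one_pos.trans hβ).ne' hr)
    (fun r _ ↦ neg_le_neg (add_le_add ?_ ?_)) ht
  · exact le_genFlowDissipation_of_le_one hμ.le hα0 hα1.le (hmin _) (hPL _)
  · simpa using le_genFlowDissipation_of_one_le hμ.le hβ.le (hmin _) (hPL _)

end IsGenFlowM

theorem genFlowM_fixed_time_convergence_general (hf : Differentiable ℝ f) (hμ : 0 < μ)
    (hmin : ∀ y, fstar ≤ f y)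
    (hPL : ∀ y, μ * (f y - fstar) ≤ 1 / 2 * ∑ i, grad f y i ^ 2)
    {p q : ℝ} (hp : 2 < p) (hq : q ∈ Ioo (1 : ℝ) 2)
    (h : IsGenFlowM f (1 / (p - 1)) (1 / (q - 1)) x v)
    (ht : 1 / ((2 : ℝ) ^ (p / (2 * (p - 1))) * min 1 (μ ^ (p / (2 * (p - 1)))) *
            (1 - p / (2 * (p - 1)))) +
        1 / (2 * (n : ℝ) ^ ((q - 2) / (2 * (q - 1))) * min 1 (μ ^ (q / (2 * (q - 1)))) *
            (q / (2 * (q - 1)) - 1)) ≤ t) :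
    f (x t) = fstar ∧ v t = 0 := by
  have hp1 : 0 < p - 1 := by linarith
  have hq1 : 0 < q - 1 := sub_pos.2 hq.1
  have hα0 : 0 < p / (2 * (p - 1)) := div_pos (by linarith) (by positivity)
  have hα1 : p / (2 * (p - 1)) < 1 := (div_lt_one (by positivity)).2 (by linarith)
  have hβ : 1 < q / (2 * (q - 1)) := (one_lt_div (by positivity)).2 (by linarith [hq.2])
  rw [one_div_sub_one_eq_two_mul_sub_one (sub_pos.1 hp1).ne',
    one_div_sub_one_eq_two_mul_sub_one hq.1.ne'] at h
  rw [sub_two_div_eq_one_sub hq.1.ne'] at ht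
  exact (genFlowEnergy_eq_zero_iff (hmin _)).1
    (h.genFlowEnergy_eq_zero hf hμ hmin hPL hα0 hα1 hβ ht)

end Flow

/-- **GenFlow(M) fixed-time convergence** (Theorem 2). If `f` is `C¹`, satisfies the
PL inequality with modulus `μ > 0` and has a unique minimizer `x*`, then any solution
of the momentum dynamics
`v̇ᵢ = ∇ᵢf(x) - sign(vᵢ)(|vᵢ|^{1/(p-1)} + |vᵢ|^{1/(q-1)})`,
`ẋᵢ = -vᵢ - sign(∇ᵢf(x))(|∇ᵢf(x)|^{1/(p-1)} + |∇ᵢf(x)|^{1/(q-1)})`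
reaches `(x*, 0)` by the time `T̄ = 1/(a(1-α)) + 1/(b(β-1))` with `α = p/(2(p-1))`,
`β = q/(2(q-1))`, `a = 2^α min(1, μ^α)`, `b = 2 n^{(q-2)/(2(q-1))} min(1, μ^β)`. -/
theorem genFlowM_fixed_time_convergence
    {n : ℕ} (f : (Fin n → ℝ) → ℝ) (hf : ContDiff ℝ 1 f)
    (μ : ℝ) (hμ : 0 < μ)
    (xstar : Fin n → ℝ) (fstar : ℝ) (hfstar : fstar = f xstar)
    (hmin : ∀ y, fstar ≤ f y)
    (huniq : ∀ y, (∀ z, f y ≤ f z) → y = xstar)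
    (hPL : ∀ y, μ * (f y - fstar) ≤ (1 / 2) * ∑ i, grad f y i ^ 2)
    (p q : ℝ) (hp : 2 < p) (hq : q ∈ Set.Ioo (1 : ℝ) 2)
    (x v : ℝ → (Fin n → ℝ))
    (hv : ∀ t : ℝ, 0 ≤ t → ∀ i, HasDerivAt (fun s => v s i)
      (grad f (x t) i -
        Real.sign (v t i) * (|v t i| ^ (1 / (p - 1)) + |v t i| ^ (1 / (q - 1)))) t)
    (hx : ∀ t : ℝ, 0 ≤ t → ∀ i, HasDerivAt (fun s => x s i)
      (-v t i -
        Real.sign (grad f (x t) i) *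
          (|grad f (x t) i| ^ (1 / (p - 1)) + |grad f (x t) i| ^ (1 / (q - 1)))) t) :
    ∀ t : ℝ,
      1 / ((2 : ℝ) ^ (p / (2 * (p - 1))) * min 1 (μ ^ (p / (2 * (p - 1)))) *
            (1 - p / (2 * (p - 1)))) +
        1 / (2 * (n : ℝ) ^ ((q - 2) / (2 * (q - 1))) * min 1 (μ ^ (q / (2 * (q - 1)))) *
            (q / (2 * (q - 1)) - 1)) ≤ t →
      x t = xstar ∧ v t = 0 := by
  intro t ht
  obtain ⟨hft, hvt⟩ := genFlowM_fixed_time_convergence_general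
    (hf.differentiable one_ne_zero) hμ hmin hPL hp hq ⟨hv, hx⟩ ht
  exact ⟨huniq _ fun z ↦ hft.trans_le (hmin z), hvt⟩
end

section
/- Let g : ℝⁿ × ℝᵐ → ℝ be twice continuously differentiable with ∇²ₓₓ g(x,y) ⪰ μ₁ I_n and ∇²ᵧᵧ g(x,y) ⪯ −μ₂ I_m for all (x,y), where μ₁, μ₂ > 0. Fix p > 2, q ∈ (1,2) and define ∇G(x,y) = (∇ₓg(x,y), −∇ᵧg(x,y)). Let (x, y) : [0,∞) → ℝⁿ × ℝᵐ be a differentiable trajectory such that at every t with ∇G(x(t),y(t)) ≠ 0, ẋ(t) = −∇ₓg · ( ‖∇G‖^{−(p−2)/(p−1)} + ‖∇G‖^{−(q−2)/(q−1)} ) and ẏ(t) = ∇ᵧg · ( ‖∇G‖^{−(p−2)/(p−1)} + ‖∇G‖^{−(q−2)/(q−1)} ) (all evaluated at (x(t),y(t))). Define V(t) = (1/2)‖∇ₓg(x(t),y(t))‖² + (1/2)‖∇ᵧg(x(t),y(t))‖². Then at every t with ∇G(x(t),y(t)) ≠ 0, d/dt V(t) ≤ −min(μ₁, μ₂) ·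 ( (2V(t))^{p/(2(p−1))} + (2V(t))^{q/(2(q−1))} ). -/
/-- Partial gradient of `g(x,y)` in `x`. -/
noncomputable def gradx {n m : ℕ} (g : (Fin n → ℝ) → (Fin m → ℝ) → ℝ)
    (x : Fin n → ℝ) (y : Fin m → ℝ) : Fin n → ℝ :=
  fun i => fderiv ℝ (fun x' => g x' y) x (Pi.single i 1)

/-- Partial gradient of `g(x,y)` in `y`. -/
noncomputable def grady {n m : ℕ} (g : (Fin n → ℝ) → (Fin m → ℝ) → ℝ)
    (x : Fin n → ℝ) (y : Fin m → ℝ) : Fin m → ℝ :=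
  fun j => fderiv ℝ (fun y' => g x y') y (Pi.single j 1)

/-- The Hessian block `∇²ₓₓ g(x,y)`. -/
noncomputable def hessxx {n m : ℕ} (g : (Fin n → ℝ) → (Fin m → ℝ) → ℝ)
    (x : Fin n → ℝ) (y : Fin m → ℝ) : Matrix (Fin n) (Fin n) ℝ :=
  Matrix.of fun i j => fderiv ℝ (fun x' => gradx g x' y j) x (Pi.single i 1)

/-- The Hessian block `∇²ᵧᵧ g(x,y)`. -/
noncomputable def hessyy {n m : ℕ} (g : (Fin n → ℝ) → (Fin m → ℝ) → ℝ)
    (x : Fin n → ℝ) (y : Fin m → ℝ) : Matrix (Fin m) (Fin m) ℝ :=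
  Matrix.of fun i j => fderiv ℝ (fun y' => grady g x y' j) y (Pi.single i 1)

/-- `‖∇G(x,y)‖` where `∇G = (∇ₓg, -∇ᵧg)`. -/
noncomputable def normG {n m : ℕ} (g : (Fin n → ℝ) → (Fin m → ℝ) → ℝ)
    (x : Fin n → ℝ) (y : Fin m → ℝ) : ℝ :=
  Real.sqrt (∑ i, gradx g x y i ^ 2 + ∑ j, grady g x y j ^ 2)

/-!
Along a flow `ẋ = -c ∇ₓg`, `ẏ = c ∇ᵧg`, with `a = ∇ₓg` and `b = ∇ᵧg`, the derivative of
`V = ½(‖a‖² + ‖b‖²)` is `D²g (-c a, c b) (a, b)`. The mixed terms `-D²g (a, 0) (0, b)` and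
`D²g (0, b) (a, 0)` cancel because `D²g` is symmetric, leaving
`c (D²g (0, b) (0, b) - D²g (a, 0) (a, 0)) ≤ -c min(μ₁, μ₂) · 2V`. Since `‖∇G‖ = (2V)^{1/2}`,
multiplying `2V` by the two powers of `‖∇G‖` that make up `c` yields the stated exponents.
-/

section General

theorem sum_smul_apply_single {ι R M : Type*} [Fintype ι] [DecidableEq ι] [Semiring R]
    [AddCommMonoid M] [Module R M] (L : (ι → R) →ₗ[R] M) (u : ι → R) :
    ∑ i, u i • L (Pi.single i 1) = L u := by
  conv_rhs => rw [pi_eq_sum_univ' u]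
  simp only [map_sum, map_smul]

theorem sum_sum_mul_apply_single_mul {ι κ R : Type*} [Fintype ι] [Fintype κ] [DecidableEq ι]
    [DecidableEq κ] [CommSemiring R] (B : (ι → R) →ₗ[R] (κ → R) →ₗ[R] R) (u : ι → R)
    (v : κ → R) : ∑ i, ∑ j, u i * B (Pi.single i 1) (Pi.single j 1) * v j = B u v := by
  conv_rhs => rw [← Matrix.toLinearMap₂'_toMatrix' (R := R) B, Matrix.toLinearMap₂'_apply]
  simp only [LinearMap.toMatrix₂'_apply, smul_eq_mul, mul_assoc, mul_comm (v _)]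

theorem sum_sq_pos {ι R : Type*} [Fintype ι] [Ring R] [LinearOrder R] [IsStrictOrderedRing R]
    {u : ι → R} (hu : u ≠ 0) : 0 < ∑ i, u i ^ 2 := by
  obtain ⟨i, hi⟩ := Function.ne_iff.1 hu
  exact Finset.sum_pos' (fun j _ => sq_nonneg (u j)) ⟨i, Finset.mem_univ i, sq_pos_of_ne_zero hi⟩

theorem sqrt_rpow_neg_div_mul_self {s r : ℝ} (hs : 0 < s) (hr : r ≠ 1) :
    √s ^ (-((r - 2) / (r - 1))) * s = s ^ (r / (2 * (r - 1))) := by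
  have hr' : r - 1 ≠ 0 := sub_ne_zero.2 hr
  rw [Real.sqrt_eq_rpow, ← Real.rpow_mul hs.le, ← Real.rpow_add_one hs.ne']
  congr 1
  field_simp
  ring

variable {𝕜 E F G : Type*} [NontriviallyNormedField 𝕜] [NormedAddCommGroup E]
  [NormedSpace 𝕜 E] [NormedAddCommGroup F] [NormedSpace 𝕜 F] [NormedAddCommGroup G]
  [NormedSpace 𝕜 G]

theorem hasFDerivAt_fderiv_apply {f : E → F} {z : E} (hf : ContDiffAt 𝕜 2 f z) (w : E) :
    HasFDerivAt (fun z' => fderiv 𝕜 f z' w) ((fderiv 𝕜 (fderiv 𝕜 f) z).flip w) z := by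
  have hf' : ContDiffAt 𝕜 1 (fderiv 𝕜 f) z := hf.fderiv_right (by norm_num)
  exact (ContinuousLinearMap.apply 𝕜 F w).hasFDerivAt.comp z
    (hf'.differentiableAt (by norm_num)).hasFDerivAt

theorem fderiv_fderiv_neg_prodMk_apply_prodMk {f : E × F → G} {z : E × F}
    (hf : IsSymmSndFDerivAt 𝕜 f z) (a : E) (b : F) :
    fderiv 𝕜 (fderiv 𝕜 f) z (-a, b) (a, b) =
      fderiv 𝕜 (fderiv 𝕜 f) z (0, b) (0, b) - fderiv 𝕜 (fderiv 𝕜 f) z (a, 0) (a, 0) := by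
  have hsub : ((-a, b) : E × F) = (0, b) - (a, 0) := by simp
  have hadd : ((a, b) : E × F) = (0, b) + (a, 0) := by simp
  rw [hsub, hadd]
  simp only [map_sub, map_add, sub_apply, hf.eq (a, 0) (0, b)]
  abel

end General

section SaddlePoint

variable {n m : ℕ} {g : (Fin n → ℝ) → (Fin m → ℝ) → ℝ}

/-- The full Hessian of `g` at `(x, y)`, as a bilinear form on `ℝⁿ × ℝᵐ`. -/
noncomputable def hess (g : (Fin n → ℝ) → (Fin m → ℝ) → ℝ) (x : Fin n → ℝ) (y : Fin m → ℝ) :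
    (Fin n → ℝ) × (Fin m → ℝ) →L[ℝ] (Fin n → ℝ) × (Fin m → ℝ) →L[ℝ] ℝ :=
  fderiv ℝ (fderiv ℝ ↿g) (x, y)

/-- The Lyapunov function `V = ½‖∇ₓg‖² + ½‖∇ᵧg‖²`, as a function on the state space. -/
noncomputable def lyapunov (g : (Fin n → ℝ) → (Fin m → ℝ) → ℝ) (x : Fin n → ℝ)
    (y : Fin m → ℝ) : ℝ :=
  (1 / 2) * ∑ i, gradx g x y i ^ 2 + (1 / 2) * ∑ j, grady g x y j ^ 2

/-- The factor `‖∇G‖^{-(p-2)/(p-1)} + ‖∇G‖^{-(q-2)/(q-1)}` by which the saddle-point dynamics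
rescales the gradient descent-ascent field. -/
noncomputable def saddleSpeed (p q : ℝ) (g : (Fin n → ℝ) → (Fin m → ℝ) → ℝ) (x : Fin n → ℝ)
    (y : Fin m → ℝ) : ℝ :=
  normG g x y ^ (-((p - 2) / (p - 1))) + normG g x y ^ (-((q - 2) / (q - 1)))

variable {x₀ : Fin n → ℝ} {y₀ : Fin m → ℝ}

theorem two_mul_lyapunov :
    2 * lyapunov g x₀ y₀ = ∑ i, gradx g x₀ y₀ i ^ 2 + ∑ j, grady g x₀ y₀ j ^ 2 := by
  unfold lyapunov
  ring

theorem normG_eq_sqrt_two_mul_lyapunov : normG g x₀ y₀ = √(2 * lyapunov g x₀ y₀) := by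
  rw [two_mul_lyapunov, normG]

theorem two_mul_lyapunov_pos (h : ¬(gradx g x₀ y₀ = 0 ∧ grady g x₀ y₀ = 0)) :
    0 < 2 * lyapunov g x₀ y₀ := by
  rw [two_mul_lyapunov]
  rcases not_and_or.1 h with ha | hb
  · exact add_pos_of_pos_of_nonneg (sum_sq_pos ha) (Finset.sum_nonneg fun j _ => sq_nonneg _)
  · exact add_pos_of_nonneg_of_pos (Finset.sum_nonneg fun i _ => sq_nonneg _) (sum_sq_pos hb)

theorem saddleSpeed_nonneg (p q : ℝ) : 0 ≤ saddleSpeed p q g x₀ y₀ :=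
  add_nonneg (Real.rpow_nonneg (Real.sqrt_nonneg _) _) (Real.rpow_nonneg (Real.sqrt_nonneg _) _)

theorem saddleSpeed_mul_two_mul_lyapunov {p q : ℝ} (hp : p ≠ 1) (hq : q ≠ 1)
    (h : ¬(gradx g x₀ y₀ = 0 ∧ grady g x₀ y₀ = 0)) :
    saddleSpeed p q g x₀ y₀ * (2 * lyapunov g x₀ y₀) =
      (2 * lyapunov g x₀ y₀) ^ (p / (2 * (p - 1))) +
        (2 * lyapunov g x₀ y₀) ^ (q / (2 * (q - 1))) := by
  have hV := two_mul_lyapunov_pos h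
  rw [saddleSpeed, normG_eq_sqrt_two_mul_lyapunov, add_mul, sqrt_rpow_neg_div_mul_self hV hp,
    sqrt_rpow_neg_div_mul_self hV hq]

theorem gradx_apply_eq_fderiv (hg : DifferentiableAt ℝ ↿g (x₀, y₀)) (i : Fin n) :
    gradx g x₀ y₀ i = fderiv ℝ ↿g (x₀, y₀) (Pi.single i 1, 0) := by
  have hcomp := hg.hasFDerivAt.comp x₀ (hasFDerivAt_prodMk_left (𝕜 := ℝ) x₀ y₀)
  exact DFunLike.congr_fun hcomp.fderiv _

theorem grady_apply_eq_fderiv (hg : DifferentiableAt ℝ ↿g (x₀, y₀)) (j : Fin m) :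
    grady g x₀ y₀ j = fderiv ℝ ↿g (x₀, y₀) (0, Pi.single j 1) := by
  have hcomp := hg.hasFDerivAt.comp y₀ (hasFDerivAt_prodMk_right (𝕜 := ℝ) x₀ y₀)
  exact DFunLike.congr_fun hcomp.fderiv _

theorem hasFDerivAt_gradx_apply (hg : ContDiffAt ℝ 2 ↿g (x₀, y₀)) (i : Fin n) :
    HasFDerivAt (fun z : (Fin n → ℝ) × (Fin m → ℝ) => gradx g z.1 z.2 i)
      ((hess g x₀ y₀).flip (Pi.single i 1, 0)) (x₀, y₀) :=
  (hasFDerivAt_fderiv_apply hg (Pi.single i 1, 0)).congr_of_eventuallyEq <|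
    (hg.eventually (by simp)).mono fun _ hz =>
      gradx_apply_eq_fderiv (hz.differentiableAt (by norm_num)) i

theorem hasFDerivAt_grady_apply (hg : ContDiffAt ℝ 2 ↿g (x₀, y₀)) (j : Fin m) :
    HasFDerivAt (fun z : (Fin n → ℝ) × (Fin m → ℝ) => grady g z.1 z.2 j)
      ((hess g x₀ y₀).flip (0, Pi.single j 1)) (x₀, y₀) :=
  (hasFDerivAt_fderiv_apply hg (0, Pi.single j 1)).congr_of_eventuallyEq <|
    (hg.eventually (by simp)).mono fun _ hz =>
      grady_apply_eq_fderiv (hz.differentiableAt (by norm_num)) j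

theorem hessxx_apply (hg : ContDiffAt ℝ 2 ↿g (x₀, y₀)) (i j : Fin n) :
    hessxx g x₀ y₀ i j = hess g x₀ y₀ (Pi.single i 1, 0) (Pi.single j 1, 0) := by
  have hcomp := (hasFDerivAt_gradx_apply hg j).comp x₀ (hasFDerivAt_prodMk_left (𝕜 := ℝ) x₀ y₀)
  exact DFunLike.congr_fun hcomp.fderiv _

theorem hessyy_apply (hg : ContDiffAt ℝ 2 ↿g (x₀, y₀)) (i j : Fin m) :
    hessyy g x₀ y₀ i j = hess g x₀ y₀ (0, Pi.single i 1) (0, Pi.single j 1) := by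
  have hcomp := (hasFDerivAt_grady_apply hg j).comp y₀ (hasFDerivAt_prodMk_right (𝕜 := ℝ) x₀ y₀)
  exact DFunLike.congr_fun hcomp.fderiv _

theorem sum_mul_hessxx_mul (hg : ContDiffAt ℝ 2 ↿g (x₀, y₀)) (u v : Fin n → ℝ) :
    ∑ i, ∑ j, u i * hessxx g x₀ y₀ i j * v j = hess g x₀ y₀ (u, 0) (v, 0) := by
  simp only [hessxx_apply hg]
  exact sum_sum_mul_apply_single_mul
    ((hess g x₀ y₀).toLinearMap₁₂.compl₁₂ (.inl ℝ _ _) (.inl ℝ _ _)) u v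

theorem sum_mul_hessyy_mul (hg : ContDiffAt ℝ 2 ↿g (x₀, y₀)) (u v : Fin m → ℝ) :
    ∑ i, ∑ j, u i * hessyy g x₀ y₀ i j * v j = hess g x₀ y₀ (0, u) (0, v) := by
  simp only [hessyy_apply hg]
  exact sum_sum_mul_apply_single_mul
    ((hess g x₀ y₀).toLinearMap₁₂.compl₁₂ (.inr ℝ _ _) (.inr ℝ _ _)) u v

theorem hess_neg_prodMk_apply_prodMk_le (hg : ContDiffAt ℝ 2 ↿g (x₀, y₀)) {μ₁ μ₂ : ℝ}
    {u : Fin n → ℝ} {w : Fin m → ℝ}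
    (hu : μ₁ * ∑ i, u i ^ 2 ≤ ∑ i, ∑ j, u i * hessxx g x₀ y₀ i j * u j)
    (hw : ∑ i, ∑ j, w i * hessyy g x₀ y₀ i j * w j ≤ -μ₂ * ∑ j, w j ^ 2) :
    hess g x₀ y₀ (-u, w) (u, w) ≤ -min μ₁ μ₂ * (∑ i, u i ^ 2 + ∑ j, w j ^ 2) := by
  have hsymm := hg.isSymmSndFDerivAt (by simp)
  rw [sum_mul_hessxx_mul hg] at hu
  rw [sum_mul_hessyy_mul hg] at hw
  have hmin₁ : min μ₁ μ₂ * ∑ i, u i ^ 2 ≤ μ₁ * ∑ i, u i ^ 2 := by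
    gcongr
    exact min_le_left _ _
  have hmin₂ : min μ₁ μ₂ * ∑ j, w j ^ 2 ≤ μ₂ * ∑ j, w j ^ 2 := by
    gcongr
    exact min_le_right _ _
  calc hess g x₀ y₀ (-u, w) (u, w)
      = hess g x₀ y₀ (0, w) (0, w) - hess g x₀ y₀ (u, 0) (u, 0) :=
        fderiv_fderiv_neg_prodMk_apply_prodMk hsymm u w
    _ ≤ -min μ₁ μ₂ * (∑ i, u i ^ 2 + ∑ j, w j ^ 2) := by linarith

variable {x : ℝ → Fin n → ℝ} {y : ℝ → Fin m → ℝ} {t : ℝ}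

theorem hasDerivAt_lyapunov (hg : ContDiffAt ℝ 2 ↿g (x t, y t)) {x' : Fin n → ℝ}
    {y' : Fin m → ℝ} (hx : HasDerivAt x x' t) (hy : HasDerivAt y y' t) :
    HasDerivAt (fun s => lyapunov g (x s) (y s))
      (hess g (x t) (y t) (x', y') (gradx g (x t) (y t), grady g (x t) (y t))) t := by
  set a := gradx g (x t) (y t)
  set b := grady g (x t) (y t)
  set L := hess g (x t) (y t) (x', y')
  have hgradx (i : Fin n) :
      HasDerivAt (fun s => gradx g (x s) (y s) i) (L (Pi.single i 1, 0)) t := by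
    have hcomp := (hasFDerivAt_gradx_apply hg i).comp_hasDerivAt t (hx.prodMk hy)
    exact hcomp
  have hgrady (j : Fin m) :
      HasDerivAt (fun s => grady g (x s) (y s) j) (L (0, Pi.single j 1)) t := by
    have hcomp := (hasFDerivAt_grady_apply hg j).comp_hasDerivAt t (hx.prodMk hy)
    exact hcomp
  have hL : L (a, b) =
      ∑ i, a i * L (Pi.single i 1, 0) + ∑ j, b j * L (0, Pi.single j 1) := by
    rw [← L.comp_inl_add_comp_inr (a, b)]
    exact congrArg₂ (· + ·) (sum_smul_apply_single (L.comp (.inl ℝ _ _)).toLinearMap a).symm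
      (sum_smul_apply_single (L.comp (.inr ℝ _ _)).toLinearMap b).symm
  refine (((HasDerivAt.fun_sum fun i _ => (hgradx i).pow 2).const_mul (1 / 2 : ℝ)).add
    ((HasDerivAt.fun_sum fun j _ => (hgrady j).pow 2).const_mul (1 / 2 : ℝ))).congr_deriv ?_
  rw [hL, Finset.mul_sum, Finset.mul_sum]
  congr 1 <;> refine Finset.sum_congr rfl fun i _ => ?_ <;> push_cast <;> ring

theorem deriv_lyapunov_le (hg : ContDiffAt ℝ 2 ↿g (x t, y t)) {c μ₁ μ₂ : ℝ} (hc : 0 ≤ c)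
    (hxx : μ₁ * ∑ i, gradx g (x t) (y t) i ^ 2 ≤
      ∑ i, ∑ j, gradx g (x t) (y t) i * hessxx g (x t) (y t) i j * gradx g (x t) (y t) j)
    (hyy : ∑ i, ∑ j, grady g (x t) (y t) i * hessyy g (x t) (y t) i j * grady g (x t) (y t) j ≤
      -μ₂ * ∑ j, grady g (x t) (y t) j ^ 2)
    (hx : HasDerivAt x (c • -gradx g (x t) (y t)) t)
    (hy : HasDerivAt y (c • grady g (x t) (y t)) t) :
    deriv (fun s => lyapunov g (x s) (y s)) t ≤
      -min μ₁ μ₂ * (c * (2 * lyapunov g (x t) (y t))) := by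
  set a := gradx g (x t) (y t)
  set b := grady g (x t) (y t)
  calc deriv (fun s => lyapunov g (x s) (y s)) t
      = hess g (x t) (y t) (c • (-a, b)) (a, b) := (hasDerivAt_lyapunov hg hx hy).deriv
    _ = c * hess g (x t) (y t) (-a, b) (a, b) := by
        rw [map_smul, smul_apply, smul_eq_mul]
    _ ≤ c * (-min μ₁ μ₂ * (∑ i, a i ^ 2 + ∑ j, b j ^ 2)) := by
        gcongr
        exact hess_neg_prodMk_apply_prodMk_le hg hxx hyy
    _ = -min μ₁ μ₂ * (c * (2 * lyapunov g (x t) (y t))) := by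
        rw [two_mul_lyapunov]
        ring

end SaddlePoint

theorem saddle_point_dynamics_lyapunov_inequality_general {n m : ℕ}
    {g : (Fin n → ℝ) → (Fin m → ℝ) → ℝ} {x : ℝ → Fin n → ℝ} {y : ℝ → Fin m → ℝ} {t : ℝ}
    {μ₁ μ₂ p q : ℝ} (hg : ContDiffAt ℝ 2 ↿g (x t, y t))
    (hxx : ∀ u : Fin n → ℝ,
      μ₁ * ∑ i, u i ^ 2 ≤ ∑ i, ∑ j, u i * hessxx g (x t) (y t) i j * u j)
    (hyy : ∀ w : Fin m → ℝ,
      ∑ i, ∑ j, w i * hessyy g (x t) (y t) i j * w j ≤ -μ₂ * ∑ j, w j ^ 2)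
    (hp : p ≠ 1) (hq : q ≠ 1)
    (hx : ∀ i, HasDerivAt (fun s => x s i)
      (-gradx g (x t) (y t) i * saddleSpeed p q g (x t) (y t)) t)
    (hy : ∀ j, HasDerivAt (fun s => y s j)
      (grady g (x t) (y t) j * saddleSpeed p q g (x t) (y t)) t)
    (hne : ¬(gradx g (x t) (y t) = 0 ∧ grady g (x t) (y t) = 0)) :
    deriv (fun s => lyapunov g (x s) (y s)) t ≤
      -min μ₁ μ₂ * ((2 * lyapunov g (x t) (y t)) ^ (p / (2 * (p - 1))) +
        (2 * lyapunov g (x t) (y t)) ^ (q / (2 * (q - 1)))) := by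
  rw [← saddleSpeed_mul_two_mul_lyapunov hp hq hne]
  refine deriv_lyapunov_le hg (saddleSpeed_nonneg p q) (hxx _) (hyy _) ?_ ?_
  · exact hasDerivAt_pi.2 fun i => (hx i).congr_deriv (mul_comm _ _)
  · exact hasDerivAt_pi.2 fun j => (hy j).congr_deriv (mul_comm _ _)

/-- **Key differential inequality in the proof of Theorem 4 (equation (25)).** Along
the normalized saddle-point dynamics for a `C²`, strongly convex-strongly concave `g`,
the Lyapunov function `V = (1/2)‖∇ₓg‖² + (1/2)‖∇ᵧg‖²` satisfies, at every time where
`∇G ≠ 0`, `V̇ ≤ -min(μ₁,μ₂)((2V)^{p/(2(p-1))} + (2V)^{q/(2(q-1))})`. -/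
theorem saddle_point_dynamics_lyapunov_inequality
    {n m : ℕ} (g : (Fin n → ℝ) → (Fin m → ℝ) → ℝ)
    (hg : ContDiff ℝ 2 (fun z : (Fin n → ℝ) × (Fin m → ℝ) => g z.1 z.2))
    (μ₁ μ₂ : ℝ) (hμ₁ : 0 < μ₁) (hμ₂ : 0 < μ₂)
    (hxx : ∀ x y (u : Fin n → ℝ),
      μ₁ * ∑ i, u i ^ 2 ≤ ∑ i, ∑ j, u i * hessxx g x y i j * u j)
    (hyy : ∀ x y (w : Fin m → ℝ),
      ∑ i, ∑ j, w i * hessyy g x y i j * w j ≤ -μ₂ * ∑ j, w j ^ 2)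
    (p q : ℝ) (hp : 2 < p) (hq : q ∈ Set.Ioo (1 : ℝ) 2)
    (x : ℝ → (Fin n → ℝ)) (y : ℝ → (Fin m → ℝ))
    (hdyn : ∀ t : ℝ, 0 ≤ t →
      ¬(gradx g (x t) (y t) = 0 ∧ grady g (x t) (y t) = 0) →
      (∀ i, HasDerivAt (fun s => x s i)
        (-gradx g (x t) (y t) i *
          (normG g (x t) (y t) ^ (-((p - 2) / (p - 1))) +
            normG g (x t) (y t) ^ (-((q - 2) / (q - 1))))) t) ∧
      (∀ j, HasDerivAt (fun s => y s j)
        (grady g (x t) (y t) j *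
          (normG g (x t) (y t) ^ (-((p - 2) / (p - 1))) +
            normG g (x t) (y t) ^ (-((q - 2) / (q - 1))))) t)) :
    ∀ t : ℝ, 0 ≤ t →
      ¬(gradx g (x t) (y t) = 0 ∧ grady g (x t) (y t) = 0) →
      deriv (fun s =>
          (1 / 2) * ∑ i, gradx g (x s) (y s) i ^ 2 +
            (1 / 2) * ∑ j, grady g (x s) (y s) j ^ 2) t ≤
        -min μ₁ μ₂ *
          ((2 * ((1 / 2) * ∑ i, gradx g (x t) (y t) i ^ 2 +
              (1 / 2) * ∑ j, grady g (x t) (y t) j ^ 2)) ^ (p / (2 * (p - 1))) +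
            (2 * ((1 / 2) * ∑ i, gradx g (x t) (y t) i ^ 2 +
              (1 / 2) * ∑ j, grady g (x t) (y t) j ^ 2)) ^ (q / (2 * (q - 1)))) := by
  intro t ht hne
  obtain ⟨hx, hy⟩ := hdyn t ht hne
  exact saddle_point_dynamics_lyapunov_inequality_general hg.contDiffAt (hxx _ _) (hyy _ _)
    (one_lt_two.trans hp).ne' hq.1.ne' hx hy hne
end
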